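/- arXiv:1011.1110 — 6 statements merged into one kernel-verified Lean document; each statement's English description precedes it below -/
import Mathlib

section
/- Let (W,S) be a Coxeter system, let 𝗐 = (𝗐_1,…,𝗐_p) be a reduced word for an element w ∈ W, and let P be a subset of {1,…,p}. Then for each x ∈ W there is at most one mask σ on 𝗐 whose set of defect positions is exactly P and which satisfies 𝗐^σ = x. -/
/-!
The mask is recovered from its value and its defect set by reading the word from right to left.
If `y` is the value of the mask after letter `j` and `s` is that letter, then the value before
it is `y` or `y * s`. Exactly one of these two elements has `s` as a right descent, so the defect
status of position `j` decides which one occurs (`eq_of_mul_eq_of_descent_iff`). Hence two masks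
with the same value and the same defects agree on all prefix products and on all letters.
-/

variable {B W : Type*} [Group W]

/-- The product of the subexpression of the word `w` selected by the mask `σ`,
using only the first `j` letters (`𝗐^{σ[j]}`). -/
def maskPrefix {M : CoxeterMatrix B} (cs : CoxeterSystem M W) (w : List B)
    (σ : Fin w.length → Bool) : ℕ → W
  | 0 => 1
  | j + 1 =>
      maskPrefix cs w σ j *
        if h : j < w.length then (if σ ⟨j, h⟩ then cs.simple (w.get ⟨j, h⟩) else 1) else 1

/-- The element `𝗐^σ` encoded by the mask `σ` on the word `w`. -/
def maskProd {M : CoxeterMatrix B} (cs : CoxeterSystem M W) (w : List B)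
    (σ : Fin w.length → Bool) : W :=
  maskPrefix cs w σ w.length

/-- Position `i` (0-based; the paper's `j = i+1`) is a defect of the mask `σ` on `w`:
`ℓ(𝗐^{σ[j-1]} 𝗐_j) < ℓ(𝗐^{σ[j-1]})`. -/
def IsDefect {M : CoxeterMatrix B} (cs : CoxeterSystem M W) (w : List B)
    (σ : Fin w.length → Bool) (i : Fin w.length) : Prop :=
  cs.length (maskPrefix cs w σ i * cs.simple (w.get i)) < cs.length (maskPrefix cs w σ i)

lemma maskPrefix_succ {M : CoxeterMatrix B} (cs : CoxeterSystem M W) (w : List B)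
    (σ : Fin w.length → Bool) (i : Fin w.length) :
    maskPrefix cs w σ (i + 1) =
      maskPrefix cs w σ i * if σ i then cs.simple (w.get i) else 1 := by
  simp [maskPrefix]

/-- One step of the right-to-left reconstruction: whether `cs.simple b` is a right descent
of `u` distinguishes `u` from `u * cs.simple b`. -/
lemma eq_of_mul_eq_of_descent_iff {M : CoxeterMatrix B} (cs : CoxeterSystem M W) (b : B)
    (u v : W) (p q : Bool)
    (hd : cs.IsRightDescent u b ↔ cs.IsRightDescent v b)
    (h : (u * if p then cs.simple b else 1) = v * if q then cs.simple b else 1) :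
    u = v ∧ p = q := by
  have hu := cs.isRightDescent_iff_not_isRightDescent_mul (w := u) (i := b)
  have hv := cs.isRightDescent_iff_not_isRightDescent_mul (w := v) (i := b)
  cases p <;> cases q <;> simp at h
  · exact ⟨h, rfl⟩
  · subst h; tauto
  · subst h; tauto
  · exact ⟨h, rfl⟩

/-- For each `x ∈ W` there is at most one mask on a reduced word `w` whose set of
defect positions is exactly `P` and which evaluates to `x`. -/
theorem at_most_one_mask_with_defect_set {M : CoxeterMatrix B} (cs : CoxeterSystem M W)
    (w : List B) (hred : cs.IsReduced w) (P : Set (Fin w.length)) (x : W)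
    (σ τ : Fin w.length → Bool)
    (hσP : ∀ i, IsDefect cs w σ i ↔ i ∈ P) (hτP : ∀ i, IsDefect cs w τ i ↔ i ∈ P)
    (hσx : maskProd cs w σ = x) (hτx : maskProd cs w τ = x) :
    σ = τ := by
  have hpre : ∀ j ≤ w.length, maskPrefix cs w σ j = maskPrefix cs w τ j := by
    intro j hj
    induction hj using Nat.decreasingInduction with
    | self => exact hσx.trans hτx.symm
    | of_succ k hk ih =>
      have h := ih
      rw [maskPrefix_succ cs w σ ⟨k, hk⟩, maskPrefix_succ cs w τ ⟨k, hk⟩] at h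
      exact (eq_of_mul_eq_of_descent_iff cs _ _ _ _ _
        ((hσP ⟨k, hk⟩).trans (hτP ⟨k, hk⟩).symm) h).1
  funext i
  have h := hpre (i + 1) i.isLt
  rw [maskPrefix_succ, maskPrefix_succ] at h
  exact (eq_of_mul_eq_of_descent_iff cs _ _ _ _ _ ((hσP i).trans (hτP i).symm) h).2
end

section
/- Let (W,S) be a Coxeter system, let 𝗐 = (𝗐_1,…,𝗐_p) be a reduced word for an element w ∈ W, and let P be a subset of {1,…,p}. Define F_𝗐^P = {𝗐^σ : σ is a mask on 𝗐 whose set of defect positions is exactly P}. Then F_𝗐^P is a lower order ideal in the Bruhat order of W: if v ∈ F_𝗐^P and u ≤ v in Bruhat order, then u ∈ F_𝗐^P. -/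
/-!
Write the word as `𝗐' s` and let `F'` be the set of elements encoded by masks on `𝗐'` with the
prescribed defects. If the last position must be a defect, then the set for `𝗐` consists of
the elements `x` and `xs` with `x ∈ F'` and `xs < x`; otherwise it consists of those with `x ∈ F'`
and `xs > x`. By induction on the number of letters `F'` is a lower ideal, and the lifting property
of Bruhat order (`bruhat_mul_simple_of_descent` and `bruhat_of_not_descent`) carries this over to
the larger set.

The lifting property is proved for the description of Bruhat order by chains `x < xt` of
reflections (`Bruhat`). Its comparison with subwords of reduced words rests on the strong exchange
condition (`strong_exchange`), which is obtained from the classical action of `W` on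
(reflections) × `ZMod 2` in which `s` sends `(t, ε)` to `(s t s, ε + [t = s])`: it shows that the
parity of the multiplicity of `t` in the right inversion sequence of a word depends only on the
element the word represents.
-/

variable {B W : Type*} [Group W]

/-- Bruhat order: `u ≤ v` iff some reduced word for `u` occurs as a (not necessarily
consecutive) subword of some reduced word for `v`. -/
def BruhatLE {M : CoxeterMatrix B} (cs : CoxeterSystem M W) (u v : W) : Prop :=
  ∃ ω : List B, cs.IsReduced ω ∧ cs.wordProd ω = v ∧
    ∃ ωu : List B, List.Sublist ωu ω ∧ cs.IsReduced ωu ∧ cs.wordProd ωu = u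

namespace DefectIdeal

open CoxeterSystem List

variable {M : CoxeterMatrix B} (cs : CoxeterSystem M W)

/-! ### Parity of inversions and the strong exchange condition -/

open Classical in
/-- The map `(t, ε) ↦ (s t s, ε + [t = s])`. The first coordinate ranges over all of `W` rather
than only over the reflections, which is harmless. -/
noncomputable def signedConj (i : B) : Function.End (W × ZMod 2) :=
  fun p => (cs.simple i * p.1 * cs.simple i, p.2 + if p.1 = cs.simple i then 1 else 0)

open Classical in
theorem prod_signedConj_apply (ω : List B) (t : W) (ε : ZMod 2) :
    (ω.map (signedConj cs)).prod (t, ε) =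
      (cs.wordProd ω * t * (cs.wordProd ω)⁻¹, ε + ((cs.rightInvSeq ω).count t : ℕ)) := by
  induction ω with
  | nil => simp; rfl
  | cons i ω ih =>
    rw [List.map_cons, List.prod_cons]
    change signedConj cs i ((ω.map (signedConj cs)).prod (t, ε)) = _
    rw [ih]
    have hiff : cs.wordProd ω * t * (cs.wordProd ω)⁻¹ = cs.simple i ↔
        (cs.wordProd ω)⁻¹ * cs.simple i * cs.wordProd ω = t := by
      constructor
      · intro h; rw [← h]; group
      · intro h; rw [← h]; group
    simp only [signedConj, rightInvSeq, List.count_cons, wordProd_cons, mul_inv_rev, inv_simple,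
      beq_iff_eq, hiff]
    refine Prod.ext (by simp [mul_assoc]) ?_
    split_ifs <;> simp [add_assoc]

theorem prod_reverse_alternatingWord {G : Type*} [Monoid G] (f : B → G) (i i' : B) (m : ℕ) :
    ((alternatingWord i' i (2 * m)).reverse.map f).prod = (f i * f i') ^ m := by
  induction m with
  | zero => simp [alternatingWord]
  | succ m ih =>
    rw [show 2 * (m + 1) = 2 * m + 1 + 1 by ring, alternatingWord_succ, alternatingWord_succ,
      pow_succ', ← ih]
    simp [mul_assoc]

/-- The inversion sequence of `(s s')^m`, with `m` the order of `s s'`, runs twice through the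
same list. -/
theorem even_count_leftInvSeq [DecidableEq W] (i i' : B) (t : W) :
    Even ((cs.leftInvSeq (alternatingWord i' i (2 * M i i'))).count t) := by
  set m := M i i'
  set g : ℕ → W := fun k => cs.wordProd (alternatingWord i i' (2 * k + 1)) with hg
  have hper : ∀ k, g (m + k) = g k := by
    intro k
    have h1 : ∀ k, (2 * k + 1) / 2 = k := by omega
    simp only [hg, prod_alternatingWord_eq_mul_pow, h1, pow_add]
    simp [m]
  have hlis : cs.leftInvSeq (alternatingWord i' i (2 * m)) = (List.range (2 * m)).map g := by
    apply List.ext_getElem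
    · simp
    · intro k h₁ h₂
      rw [getElem_leftInvSeq_alternatingWord _ _ _ _ _ (by simpa using h₂)]
      simp [hg]
  rw [hlis, two_mul, List.range_add, List.map_append, List.map_map, List.count_append]
  have : g ∘ (fun x => m + x) = g := funext hper
  rw [this]
  exact ⟨_, rfl⟩

theorem signedConj_liftable : M.IsLiftable (signedConj cs) := by
  classical
  intro i i'
  rw [← prod_reverse_alternatingWord]
  funext ⟨t, ε⟩
  rw [prod_signedConj_apply, rightInvSeq_reverse, List.count_reverse]
  have h1 : cs.wordProd (alternatingWord i' i (2 * M i i')).reverse = 1 := by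
    rw [wordProd, prod_reverse_alternatingWord, simple_mul_simple_pow]
  have h2 : (((cs.leftInvSeq (alternatingWord i' i (2 * M i i'))).count t : ℕ) : ZMod 2) = 0 :=
    (ZMod.natCast_eq_zero_iff_even).2 (even_count_leftInvSeq cs i i' t)
  rw [h1, h2]
  simp
  rfl

/-- The parity of the number of occurrences of `t` in the right inversion sequence of any word
for `w` (see `invParity_wordProd`). -/
noncomputable def invParity (w t : W) : ZMod 2 :=
  (cs.lift ⟨signedConj cs, signedConj_liftable cs⟩ w (t, 0)).2

theorem lift_signedConj_wordProd (ω : List B) :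
    cs.lift ⟨signedConj cs, signedConj_liftable cs⟩ (cs.wordProd ω) =
      (ω.map (signedConj cs)).prod := by
  induction ω with
  | nil => simp
  | cons i ω ih => rw [wordProd_cons, map_mul, lift_apply_simple, ih, List.map_cons,
      List.prod_cons]

open Classical in
theorem invParity_wordProd (ω : List B) (t : W) :
    invParity cs (cs.wordProd ω) t = ((cs.rightInvSeq ω).count t : ℕ) := by
  rw [invParity, lift_signedConj_wordProd, prod_signedConj_apply, zero_add]

theorem lift_signedConj_apply (w t : W) (ε : ZMod 2) :
    cs.lift ⟨signedConj cs, signedConj_liftable cs⟩ w (t, ε) =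
      (w * t * w⁻¹, ε + invParity cs w t) := by
  classical
  obtain ⟨ω, rfl⟩ := cs.wordProd_surjective w
  rw [invParity_wordProd, lift_signedConj_wordProd, prod_signedConj_apply]

theorem invParity_mul (x y t : W) :
    invParity cs (x * y) t = invParity cs y t + invParity cs x (y * t * y⁻¹) := by
  rw [invParity, map_mul]
  change (cs.lift ⟨signedConj cs, signedConj_liftable cs⟩ x
    (cs.lift ⟨signedConj cs, signedConj_liftable cs⟩ y (t, 0))).2 = _
  rw [lift_signedConj_apply, lift_signedConj_apply, zero_add]

theorem invParity_one (t : W) : invParity cs 1 t = 0 := by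
  rw [invParity, map_one]; rfl

theorem invParity_self {t : W} (ht : cs.IsReflection t) : invParity cs t t = 1 := by
  classical
  obtain ⟨x, i, rfl⟩ := ht
  have hs : invParity cs (cs.simple i) (cs.simple i) = 1 := by
    have := invParity_wordProd cs [i] (cs.simple i)
    simpa using this
  have h1 := invParity_mul cs x⁻¹ x (cs.simple i)
  rw [inv_mul_cancel, invParity_one] at h1
  rw [invParity_mul, invParity_mul]
  have e1 : x⁻¹ * (x * cs.simple i * x⁻¹) * x⁻¹⁻¹ = cs.simple i := by group
  have e2 : cs.simple i * cs.simple i * (cs.simple i)⁻¹ = cs.simple i := by group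
  rw [e1, e2, hs]
  linear_combination -h1

theorem mem_rightInvSeq_of_invParity {ω : List B} {t : W}
    (h : invParity cs (cs.wordProd ω) t = 1) : t ∈ cs.rightInvSeq ω := by
  classical
  rw [invParity_wordProd] at h
  by_contra hn
  rw [List.count_eq_zero_of_not_mem hn] at h
  simp at h

/-- **Strong exchange condition**, for words that need not be reduced. -/
theorem strong_exchange (ω : List B) {t : W} (ht : cs.IsReflection t)
    (hlt : cs.length (cs.wordProd ω * t) < cs.length (cs.wordProd ω)) :
    ∃ j < ω.length, cs.wordProd ω * t = cs.wordProd (ω.eraseIdx j) := by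
  have hpar : invParity cs (cs.wordProd ω) t = 1 := by
    by_contra hne
    have h0 : invParity cs (cs.wordProd ω) t = 0 := by
      revert hne; generalize invParity cs (cs.wordProd ω) t = z; revert z; decide
    -- Otherwise `t` would be an inversion of `π ω * t`, so multiplying by `t` again shortens.
    have h1 : invParity cs (cs.wordProd ω * t) t = 1 := by
      rw [invParity_mul, invParity_self cs ht, show t * t * t⁻¹ = t by group, h0, add_zero]
    obtain ⟨ω', hω', he⟩ := cs.exists_isReduced (cs.wordProd ω * t)
    rw [he] at h1
    have h2 := (cs.isRightInversion_of_mem_rightInvSeq hω'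
      (mem_rightInvSeq_of_invParity cs h1)).2
    rw [← he, mul_assoc, ht.mul_self, mul_one] at h2
    omega
  obtain ⟨j, hj, hjt⟩ := List.mem_iff_getElem.1 (mem_rightInvSeq_of_invParity cs hpar)
  refine ⟨j, by simpa using hj, ?_⟩
  rw [← wordProd_mul_getD_rightInvSeq, List.getD_eq_getElem _ 1 hj, hjt]

/-! ### Bruhat order through chains of reflections -/

/-- An elementary step `x < xt` of Bruhat order, with `t` a reflection. -/
def BruhatStep (x y : W) : Prop :=
  ∃ t, cs.IsReflection t ∧ y = x * t ∧ cs.length x < cs.length y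

/-- Bruhat order as the reflexive transitive closure of `BruhatStep`. -/
def Bruhat : W → W → Prop := Relation.ReflTransGen (BruhatStep cs)

variable {cs}

theorem bruhatStep_mul_simple {x : W} {i : B}
    (h : cs.length x < cs.length (x * cs.simple i)) : BruhatStep cs x (x * cs.simple i) :=
  ⟨_, cs.isReflection_simple i, rfl, h⟩

theorem bruhatStep_of_descent {x : W} {i : B}
    (h : cs.length (x * cs.simple i) < cs.length x) : BruhatStep cs (x * cs.simple i) x :=
  ⟨_, cs.isReflection_simple i, by simp, h⟩

theorem exists_sublist_of_bruhat {u v : W} (h : Bruhat cs u v) :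
    ∀ ω : List B, cs.wordProd ω = v → ∃ ω', ω' <+ ω ∧ cs.wordProd ω' = u := by
  induction h using Relation.ReflTransGen.head_induction_on with
  | refl => exact fun ω hω => ⟨ω, List.Sublist.refl _, hω⟩
  | head hstep _ ih =>
    intro ω hω
    obtain ⟨ω₁, hsub, hprod⟩ := ih ω hω
    obtain ⟨t, ht, rfl, hlt⟩ := hstep
    have hx : ∀ x : W, x * t * t = x := fun x => by rw [mul_assoc, ht.mul_self, mul_one]
    obtain ⟨j, _, hj⟩ := strong_exchange cs ω₁ ht (by rw [hprod, hx]; exact hlt)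
    exact ⟨ω₁.eraseIdx j, (List.eraseIdx_sublist _ _).trans hsub, by rw [← hj, hprod, hx]⟩

/-- Every word has a reduced subword with the same product. -/
theorem exists_reduced_sublist (ω : List B) :
    ∃ ω', ω' <+ ω ∧ cs.IsReduced ω' ∧ cs.wordProd ω' = cs.wordProd ω := by
  induction ω using List.reverseRecOn with
  | nil => exact ⟨[], List.Sublist.refl _, by simp [CoxeterSystem.IsReduced], rfl⟩
  | append_singleton ω i ih =>
    obtain ⟨ω', hsub, hred, hprod⟩ := ih
    have hred' : cs.length (cs.wordProd ω') = ω'.length := hred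
    rcases cs.length_mul_simple (cs.wordProd ω') i with h | h
    · refine ⟨ω' ++ [i], hsub.append (List.Sublist.refl _), ?_, ?_⟩
      · simp [CoxeterSystem.IsReduced, wordProd_append, h, hred']
      · simp [wordProd_append, hprod]
    · obtain ⟨j, hj, he⟩ := strong_exchange cs ω' (cs.isReflection_simple i) (by omega)
      have hlen := List.length_eraseIdx_add_one hj
      refine ⟨ω'.eraseIdx j, ((List.eraseIdx_sublist _ _).trans hsub).trans
        (List.sublist_append_left _ _), ?_, ?_⟩
      · rw [CoxeterSystem.IsReduced, ← he]; omega
      · rw [← he, hprod]; simp [wordProd_append]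

/-- One step of the lifting property. -/
theorem bruhat_mul_simple_of_step {u v : W} (h : BruhatStep cs u v) (i : B) :
    Bruhat cs (u * cs.simple i) v ∨ Bruhat cs (u * cs.simple i) (v * cs.simple i) := by
  obtain ⟨t, ht, rfl, hlt⟩ := h
  by_cases hts : t = cs.simple i
  · subst hts
    exact Or.inl Relation.ReflTransGen.refl
  rcases cs.length_mul_simple u i with h | h
  · right
    have ht' : cs.IsReflection (cs.simple i * t * cs.simple i) := by
      simpa using ht.conj (cs.simple i)
    have he : u * t * cs.simple i = u * cs.simple i * (cs.simple i * t * cs.simple i) := by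
      simp [mul_assoc]
    rcases lt_or_ge (cs.length (u * cs.simple i)) (cs.length (u * t * cs.simple i)) with hle | hle
    · exact Relation.ReflTransGen.single ⟨_, ht', he, hle⟩
    -- Exchange in a reduced word for `u s` either deletes `s`, so `t = s`, or makes `u t` shorter
    -- than `u`.
    exfalso
    have h'' := lt_of_le_of_ne hle (by rw [he]; exact ht'.length_mul_left_ne _)
    obtain ⟨ω, hω, rfl⟩ := cs.exists_isReduced u
    have hω' : cs.length (cs.wordProd ω) = ω.length := hω
    have hc : cs.wordProd ω * cs.simple i = cs.wordProd (ω ++ [i]) := by simp [wordProd_append]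
    obtain ⟨j, hj, hje⟩ := strong_exchange cs (ω ++ [i]) ht' (by rw [← hc, ← he]; exact h'')
    rw [← hc, ← he] at hje
    rcases lt_or_ge j ω.length with hjl | hjl
    · rw [List.eraseIdx_append_of_lt_length hjl, wordProd_append, wordProd_singleton,
        mul_left_inj] at hje
      have h1 := cs.length_wordProd_le (ω.eraseIdx j)
      have h2 := List.length_eraseIdx_add_one hjl
      rw [← hje] at h1
      omega
    · have hj0 : j = ω.length := by simp at hj; omega
      subst hj0
      rw [List.eraseIdx_append_of_length_le le_rfl] at hje
      simp only [Nat.sub_self, List.eraseIdx_cons_zero, List.append_nil, mul_assoc] at hje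
      have h1 : t * cs.simple i = 1 := mul_eq_left.1 hje
      exact hts (by rw [← cs.inv_simple i]; exact eq_inv_of_mul_eq_one_left h1)
  · left
    exact Relation.ReflTransGen.head (bruhatStep_of_descent (by omega))
      (Relation.ReflTransGen.single ⟨t, ht, rfl, hlt⟩)

/-- The **lifting property** of Bruhat order. -/
theorem bruhat_mul_simple {u v : W} (h : Bruhat cs u v) (i : B) :
    Bruhat cs (u * cs.simple i) v ∨ Bruhat cs (u * cs.simple i) (v * cs.simple i) := by
  induction h using Relation.ReflTransGen.head_induction_on with
  | refl => exact Or.inr Relation.ReflTransGen.refl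
  | head hstep hrest ih =>
    rcases bruhat_mul_simple_of_step hstep i with h | h
    · exact Or.inl (h.trans hrest)
    · exact ih.imp h.trans h.trans

theorem bruhat_of_sublist (ω : List B) : cs.IsReduced ω →
    ∀ ω', ω' <+ ω → Bruhat cs (cs.wordProd ω') (cs.wordProd ω) := by
  induction ω using List.reverseRecOn with
  | nil =>
    intro _ ω' h
    rw [List.sublist_nil.1 h]
    exact Relation.ReflTransGen.refl
  | append_singleton ω i ih =>
    intro hred ω' hsub
    have hω : cs.IsReduced ω := by simpa using hred.take ω.length
    have hstep : BruhatStep cs (cs.wordProd ω) (cs.wordProd ω * cs.simple i) := by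
      apply bruhatStep_mul_simple
      have h1 : cs.length (cs.wordProd ω) = ω.length := hω
      have h2 : cs.length (cs.wordProd (ω ++ [i])) = (ω ++ [i]).length := hred
      simp [wordProd_append] at h2
      omega
    rw [wordProd_append, wordProd_singleton]
    obtain ⟨ω₁, ω₂, rfl, h1, h2⟩ := List.sublist_append_iff.1 hsub
    have hb := ih hω ω₁ h1
    rcases List.sublist_singleton.1 h2 with rfl | rfl
    · rw [List.append_nil]
      exact hb.tail hstep
    · rw [wordProd_append, wordProd_singleton]
      exact (bruhat_mul_simple hb i).elim (fun h => h.tail hstep) id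

theorem bruhat_of_bruhatLE {u v : W} (h : BruhatLE cs u v) : Bruhat cs u v := by
  obtain ⟨ω, hω, rfl, ω', hsub, _, rfl⟩ := h
  exact bruhat_of_sublist ω hω ω' hsub

theorem bruhat_mul_simple_of_descent {u x : W} {i : B} (h : Bruhat cs u x)
    (hx : cs.length (x * cs.simple i) < cs.length x) : Bruhat cs (u * cs.simple i) x :=
  (bruhat_mul_simple h i).elim id fun h' => h'.tail (bruhatStep_of_descent hx)

/-- The other half of the lifting property: when `s` is not a descent of `u`, a reduced subword for
`u` cannot use the last letter of a word for `x` ending in `s`. -/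
theorem bruhat_of_not_descent {u x : W} {i : B} (h : Bruhat cs u x)
    (hu : ¬ cs.length (u * cs.simple i) < cs.length u) : Bruhat cs u (x * cs.simple i) := by
  obtain ⟨ω, hω, he⟩ := cs.exists_isReduced (x * cs.simple i)
  have hc : cs.wordProd (ω ++ [i]) = x := by simp [wordProd_append, ← he]
  obtain ⟨ω₀, hsub₀, hp₀⟩ := exists_sublist_of_bruhat h _ hc
  obtain ⟨ω', hsub, hred, hp⟩ := exists_reduced_sublist (cs := cs) ω₀
  obtain ⟨ω₁, ω₂, rfl, h1, h2⟩ := List.sublist_append_iff.1 (hsub.trans hsub₀)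
  rw [hp₀] at hp
  rcases List.sublist_singleton.1 h2 with rfl | rfl
  · rw [he, ← hp, List.append_nil]
    exact bruhat_of_sublist ω hω ω₁ h1
  · -- A reduced word for `u` ending in `s` would make `s` a descent of `u`.
    exfalso
    apply hu
    have h3 : cs.length (cs.wordProd (ω₁ ++ [i])) = (ω₁ ++ [i]).length := hred
    have h4 := cs.length_wordProd_le ω₁
    rw [hp] at h3
    have h5 : u * cs.simple i = cs.wordProd ω₁ := by rw [← hp]; simp [wordProd_append]
    rw [h5]
    simp at h3
    omega

/-! ### Masks -/

theorem maskPrefix_congr (w : List B) (σ τ : Fin w.length → Bool) (j : ℕ)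
    (h : ∀ i : Fin w.length, (i : ℕ) < j → σ i = τ i) :
    maskPrefix cs w σ j = maskPrefix cs w τ j := by
  induction j with
  | zero => rfl
  | succ j ih =>
    rw [maskPrefix, maskPrefix, ih fun i hi => h i (by omega)]
    congr 1
    split_ifs with h1 h2 h3 h3
    · rfl
    · exact absurd (h ⟨j, h1⟩ (Nat.lt_succ_self j) ▸ h2) h3
    · exact absurd (h ⟨j, h1⟩ (Nat.lt_succ_self j) ▸ h3) h2
    · rfl
    · rfl

/-- `x` is encoded by a mask on the first `j` letters of `w`, with the defects among these
positions exactly those in `P`. -/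
def Encoded (cs : CoxeterSystem M W) (w : List B) (P : Set (Fin w.length)) (j : ℕ) (x : W) :
    Prop :=
  ∃ σ : Fin w.length → Bool,
    (∀ i : Fin w.length, (i : ℕ) < j → (IsDefect cs w σ i ↔ i ∈ P)) ∧ maskPrefix cs w σ j = x

theorem encoded_succ_iff (w : List B) (P : Set (Fin w.length)) (j : ℕ) (hj : j < w.length)
    (x : W) : Encoded cs w P (j + 1) x ↔
      ∃ y, Encoded cs w P j y ∧
        (cs.length (y * cs.simple (w.get ⟨j, hj⟩)) < cs.length y ↔ (⟨j, hj⟩ : Fin w.length) ∈ P) ∧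
        (x = y ∨ x = y * cs.simple (w.get ⟨j, hj⟩)) := by
  constructor
  · rintro ⟨σ, hσ, rfl⟩
    refine ⟨maskPrefix cs w σ j, ⟨σ, fun i hi => hσ i (by omega), rfl⟩,
      hσ ⟨j, hj⟩ (Nat.lt_succ_self j), ?_⟩
    rw [maskPrefix, dif_pos hj]
    split_ifs
    · exact Or.inr rfl
    · exact Or.inl (mul_one _)
  · rintro ⟨y, ⟨σ, hσ, rfl⟩, hd, hx⟩
    have key : ∀ b : Bool, ∀ k ≤ j,
        maskPrefix cs w (Function.update σ ⟨j, hj⟩ b) k = maskPrefix cs w σ k := by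
      intro b k hk
      apply maskPrefix_congr
      intro i hi
      rw [Function.update_of_ne]
      rintro rfl
      exact absurd hi (by simpa using hk)
    have hdef : ∀ b : Bool, ∀ i : Fin w.length, (i : ℕ) < j + 1 →
        (IsDefect cs w (Function.update σ ⟨j, hj⟩ b) i ↔ i ∈ P) := by
      intro b i hi
      rw [IsDefect, key b i (by omega)]
      rcases Nat.lt_succ_iff_lt_or_eq.1 hi with h | h
      · exact hσ i h
      · obtain rfl : i = ⟨j, hj⟩ := Fin.ext h
        exact hd
    rcases hx with rfl | rfl
    · refine ⟨_, hdef false, ?_⟩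
      rw [maskPrefix, dif_pos hj, key _ _ le_rfl]
      simp
    · refine ⟨_, hdef true, ?_⟩
      rw [maskPrefix, dif_pos hj, key _ _ le_rfl]
      simp

theorem encoded_of_bruhat (w : List B) (P : Set (Fin w.length)) (j : ℕ) :
    j ≤ w.length → ∀ u v : W, Bruhat cs u v → Encoded cs w P j v → Encoded cs w P j u := by
  induction j with
  | zero =>
    rintro _ u v huv ⟨σ, hσ, rfl⟩
    obtain ⟨ω, hω, hu⟩ := exists_sublist_of_bruhat huv [] (by simp [maskPrefix])
    rw [List.sublist_nil.1 hω] at hu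
    exact ⟨σ, hσ, by simpa [maskPrefix] using hu⟩
  | succ j ih =>
    intro hj u v huv hv
    have ih := ih (by omega)
    rw [encoded_succ_iff w P j hj] at hv ⊢
    obtain ⟨x, hx, hd, hv⟩ := hv
    generalize w.get ⟨j, hj⟩ = i at hd hv ⊢
    by_cases hP : (⟨j, hj⟩ : Fin w.length) ∈ P
    · -- Here `xs < x`, so `u` and `us` both lie below `x`.
      simp only [hP, iff_true] at hd ⊢
      have hux : Bruhat cs u x := by
        rcases hv with rfl | rfl
        · exact huv
        · exact huv.tail (bruhatStep_of_descent hd)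
      rcases cs.length_mul_simple u i with h | h
      · exact ⟨u * cs.simple i, ih _ _ (bruhat_mul_simple_of_descent hux hd) hx, by simp [h],
          Or.inr (by simp)⟩
      · exact ⟨u, ih _ _ hux hx, by omega, Or.inl rfl⟩
    · -- Here `xs > x`, and the smaller one of `u` and `us` lies below `x`.
      simp only [hP, iff_false] at hd ⊢
      have hd' : cs.length x < cs.length (x * cs.simple i) := by
        rcases cs.length_mul_simple x i with h | h <;> omega
      have hd'' : cs.length (x * cs.simple i * cs.simple i) < cs.length (x * cs.simple i) := by
        simpa using hd'
      have hux : Bruhat cs u (x * cs.simple i) := by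
        rcases hv with rfl | rfl
        · exact huv.tail (bruhatStep_mul_simple hd')
        · exact huv
      rcases cs.length_mul_simple u i with h | h
      · have h' : ¬ cs.length (u * cs.simple i) < cs.length u := by omega
        refine ⟨u, ih _ _ ?_ hx, h', Or.inl rfl⟩
        simpa using bruhat_of_not_descent hux h'
      · have h' : ¬ cs.length (u * cs.simple i * cs.simple i) < cs.length (u * cs.simple i) := by
          simp; omega
        refine ⟨u * cs.simple i, ih _ _ ?_ hx, h', Or.inr (by simp)⟩
        simpa using bruhat_of_not_descent (bruhat_mul_simple_of_descent hux hd'') h'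

end DefectIdeal

/-- The set `F_𝗐^P` of elements encoded by masks on `w` with defect set exactly `P`
is a lower order ideal in Bruhat order. -/
theorem defect_set_lower_order_ideal {M : CoxeterMatrix B} (cs : CoxeterSystem M W)
    (w : List B) (hred : cs.IsReduced w) (P : Set (Fin w.length)) (u v : W)
    (hv : ∃ σ : Fin w.length → Bool,
      (∀ i, IsDefect cs w σ i ↔ i ∈ P) ∧ maskProd cs w σ = v)
    (huv : BruhatLE cs u v) :
    ∃ σ : Fin w.length → Bool,
      (∀ i, IsDefect cs w σ i ↔ i ∈ P) ∧ maskProd cs w σ = u := by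
  obtain ⟨σ, hσ, hprod⟩ := hv
  obtain ⟨τ, hτ, hτu⟩ := DefectIdeal.encoded_of_bruhat w P w.length le_rfl u v
    (DefectIdeal.bruhat_of_bruhatLE huv) ⟨σ, fun i _ => hσ i, hprod⟩
  exact ⟨τ, fun i => hτ i i.isLt, hτu⟩
end

section
/- Let (W,S) be a Coxeter system and let 𝗐 = (𝗐_1,…,𝗐_p) be a reduced word for an element w ∈ W. Then {𝗐^σ : σ is a mask on 𝗐 with no defects} equals the Bruhat interval {x ∈ W : x ≤ w}; moreover, for every x ≤ w there is exactly one mask σ on 𝗐 with no defects satisfying 𝗐^σ = x. -/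
/-!
The proof rests on the strong exchange property: if `t` is a reflection and `ℓ(π ω · t) < ℓ(π ω)`,
for a word `ω` that need not be reduced, then `π ω · t` is the product of `ω` with one letter
erased. It comes from the action of `W` on `W × ℤ/2` in which `s i` sends `(t, e)` to
`(s i · t · s i, e + [t = s i])`: the second coordinate counts modulo 2 how often `t` occurs in the
right inversion sequence of a word, so this parity depends only on the product of the word.

Let `SubProd ω` be the set of products of subwords of `ω`.

* Uniqueness: for a defect-free mask the last entry is `1` exactly when the last letter is a right
  descent of the product, so the mask is recovered from its product, from right to left.
* Existence of defect-free masks for all of `SubProd ω`: if `s` is a right descent of an element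
  `x` of `SubProd ω`, then `x s ∈ SubProd ω` by exchange. Thus the last mask entry can be chosen according
  to whether the last letter is a right descent of `x`, and one recurses.
* A defect-free mask selects a reduced subword, so its product lies in the Bruhat interval.
* `SubProd ω` is the same for all reduced words `ω` of a given element: by strong exchange it is closed
  under the steps `v ↦ v t`, `ℓ(v t) < ℓ(v)`, `t` a reflection, and when `ω` is reduced
  all its elements are reached from `π ω` by such steps (`chain_mul_simple` is the lifting
  argument behind this).
-/

variable {B W : Type*} [Group W]

namespace ConstantMasks

open CoxeterSystem

variable {M : CoxeterMatrix B} (cs : CoxeterSystem M W)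

/-! ### The parity action and strong exchange -/

open Classical in
/-- The generator `(t, e) ↦ (s i · t · s i, e + [t = s i])` of the parity action. It is defined on
all of `W × ℤ/2`, although only reflections `t` matter. -/
noncomputable def gen (i : B) : Function.End (W × ZMod 2) := fun p =>
  (cs.simple i * p.1 * cs.simple i, p.2 + if p.1 = cs.simple i then 1 else 0)

open Classical in
/-- Powers of `gen i * gen j`; the reflections met along the way are `c⁻ᵏ s_j`, `c = s_i s_j`. -/
theorem gen_pow (i j : B) (n : ℕ) (t : W) (e : ZMod 2) :
    ((gen cs i * gen cs j) ^ n) (t, e) =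
      ((cs.simple i * cs.simple j) ^ n * t * ((cs.simple i * cs.simple j) ^ n)⁻¹,
        e + ∑ k ∈ Finset.range (2 * n),
          if t = ((cs.simple i * cs.simple j) ^ k)⁻¹ * cs.simple j then 1 else 0) := by
  set c := cs.simple i * cs.simple j with hc
  have hcj : cs.simple j * c * cs.simple j = c⁻¹ := by
    simp [hc, mul_assoc]
  have hcjn : ∀ n : ℕ, cs.simple j * c ^ n = (c ^ n)⁻¹ * cs.simple j := by
    intro n
    have h : cs.simple j * c ^ n * (cs.simple j)⁻¹ = (cs.simple j * c * (cs.simple j)⁻¹) ^ n :=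
      conj_pow.symm
    rw [cs.inv_simple, hcj, inv_pow] at h
    rw [← h, cs.simple_mul_simple_cancel_right]
  induction n with
  | zero => simp; rfl
  | succ n ih =>
    rw [pow_succ']
    change gen cs i (gen cs j (((gen cs i * gen cs j) ^ n) (t, e))) = _
    rw [ih]
    simp only [gen]
    have h1 : (c ^ n * t * (c ^ n)⁻¹ = cs.simple j) ↔ t = (c ^ (2 * n))⁻¹ * cs.simple j := by
      rw [mul_inv_eq_iff_eq_mul, hcjn, ← eq_inv_mul_iff_mul_eq, ← mul_assoc, ← mul_inv_rev,
        ← pow_add, two_mul]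
    have h2 : (cs.simple j * (c ^ n * t * (c ^ n)⁻¹) * cs.simple j = cs.simple i) ↔
        t = (c ^ (2 * n + 1))⁻¹ * cs.simple j := by
      have : (cs.simple j * (c ^ n * t * (c ^ n)⁻¹) * cs.simple j = cs.simple i) ↔
          (c ^ n * t * (c ^ n)⁻¹ = c⁻¹ * cs.simple j) := by
        constructor
        · intro h
          have h' : c⁻¹ = cs.simple j * cs.simple i := by simp [hc]
          rw [h', ← h]
          simp [← mul_assoc]
        · intro h
          rw [h]
          simp [hc, mul_assoc]
      rw [this, mul_inv_eq_iff_eq_mul, mul_assoc c⁻¹, hcjn, ← eq_inv_mul_iff_mul_eq]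
      have e1 : (c ^ n)⁻¹ * (c⁻¹ * ((c ^ n)⁻¹ * cs.simple j)) =
          (c ^ (2 * n + 1))⁻¹ * cs.simple j := by
        rw [← mul_assoc, ← mul_assoc, ← mul_inv_rev, ← mul_inv_rev, ← pow_succ', ← pow_add]
        congr 3
        omega
      rw [e1]
    ext
    · simp only [hc, pow_succ' _ n, mul_inv_rev, cs.inv_simple, mul_assoc]
    · rw [show 2 * (n + 1) = 2 * n + 1 + 1 by ring, Finset.sum_range_succ, Finset.sum_range_succ]
      simp only [h1, h2, add_assoc]

theorem gen_liftable : M.IsLiftable (gen cs) := by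
  classical
  intro i j
  funext p
  obtain ⟨t, e⟩ := p
  have hc := cs.simple_mul_simple_pow i j
  rw [gen_pow, two_mul, Finset.sum_range_add]
  -- The sequence `c⁻ᵏ s_j` has period `M i j`, so each reflection is met an even number of times.
  simp [pow_add, hc, CharTwo.add_self_eq_zero]
  rfl

/-- The action of `W` on `W × ℤ/2`. -/
noncomputable def act : W →* Function.End (W × ZMod 2) :=
  cs.lift ⟨gen cs, gen_liftable cs⟩

theorem act_simple (i : B) : act cs (cs.simple i) = gen cs i :=
  cs.lift_apply_simple (gen_liftable cs) i

theorem act_mul (u v : W) (p : W × ZMod 2) : act cs (u * v) p = act cs u (act cs v p) := by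
  rw [map_mul]; rfl

open Classical in
theorem act_wordProd (ω : List B) (t : W) (e : ZMod 2) :
    act cs (cs.wordProd ω) (t, e) =
      (cs.wordProd ω * t * (cs.wordProd ω)⁻¹, e + ((cs.rightInvSeq ω).count t : ZMod 2)) := by
  induction ω with
  | nil => simp; rfl
  | cons i ω ih =>
    rw [cs.wordProd_cons, act_mul, ih, act_simple]
    have h : (cs.wordProd ω * t * (cs.wordProd ω)⁻¹ = cs.simple i) ↔
        ((cs.wordProd ω)⁻¹ * cs.simple i * cs.wordProd ω = t) := by
      constructor
      · intro h; rw [← h]; group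
      · intro h; rw [← h]; group
    simp only [gen, rightInvSeq, List.count_cons, h]
    ext
    · simp [mul_assoc]
    · simp [add_assoc]

theorem act_add (u t : W) (e : ZMod 2) :
    act cs u (t, e) = (u * t * u⁻¹, (act cs u (t, 0)).2 + e) := by
  classical
  obtain ⟨ω, rfl⟩ := cs.wordProd_surjective u
  simp [act_wordProd, add_comm]

theorem act_reflection {t : W} (ht : cs.IsReflection t) : (act cs t (t, 0)).2 = 1 := by
  obtain ⟨u, i, rfl⟩ := ht
  set t := u * cs.simple i * u⁻¹ with ht
  have h0 : act cs u⁻¹ (t, 0) = (cs.simple i, (act cs u⁻¹ (t, 0)).2) := by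
    rw [act_add]; simp [ht, mul_assoc]
  set a := (act cs u⁻¹ (t, 0)).2
  have h1 : act cs u (cs.simple i, a) = (t, 0) := by
    rw [← h0, ← act_mul, mul_inv_cancel, map_one]; rfl
  have h2 : act cs t (t, 0) = act cs u (cs.simple i, a + 1) := by
    conv_lhs => rw [ht, act_mul, act_mul, ← ht, h0, act_simple]
    simp [gen]
  rw [act_add] at h1
  rw [h2, act_add]
  have := congrArg Prod.snd h1
  simp only at this ⊢
  rw [← add_assoc, this, zero_add]

/-- Strong exchange, in terms of the right inversion sequence of an arbitrary word. -/
theorem mem_rightInvSeq {ω : List B} {t : W} (ht : cs.IsReflection t)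
    (hlt : cs.length (cs.wordProd ω * t) < cs.length (cs.wordProd ω)) :
    t ∈ cs.rightInvSeq ω := by
  classical
  by_contra hmem
  have h0 : (act cs (cs.wordProd ω) (t, 0)).2 = 0 := by
    rw [act_wordProd, List.count_eq_zero_of_not_mem hmem]; simp
  obtain ⟨ω', hω', he⟩ := cs.exists_isReduced (cs.wordProd ω * t)
  have h1 : (act cs (cs.wordProd ω') (t, 0)).2 = 1 := by
    have h2 : act cs t (t, 0) = (t, 1) := by
      rw [act_add, act_reflection cs ht]; simp
    rw [← he, act_mul, h2, act_add, h0, zero_add]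
  have hmem' : t ∈ cs.rightInvSeq ω' := by
    by_contra hn
    rw [act_wordProd, List.count_eq_zero_of_not_mem hn] at h1
    simp at h1
  have h3 := (cs.isRightInversion_of_mem_rightInvSeq hω' hmem').2
  rw [← he, mul_assoc, ht.mul_self, mul_one] at h3
  omega

theorem exchange {ω : List B} {t : W} (ht : cs.IsReflection t)
    (hlt : cs.length (cs.wordProd ω * t) < cs.length (cs.wordProd ω)) :
    ∃ k < ω.length, cs.wordProd ω * t = cs.wordProd (ω.eraseIdx k) := by
  obtain ⟨k, hk, rfl⟩ := List.getElem_of_mem (mem_rightInvSeq cs ht hlt)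
  refine ⟨k, by simpa using hk, ?_⟩
  rw [← cs.wordProd_mul_getD_rightInvSeq, List.getD_eq_getElem _ _ hk]

/-! ### Products of subwords -/

/-- `x` is the product of some subword of `ω`. -/
def SubProd (ω : List B) (x : W) : Prop := ∃ l, List.Sublist l ω ∧ cs.wordProd l = x

theorem SubProd.mul_reflection {ω : List B} {x t : W} (hx : SubProd cs ω x) (ht : cs.IsReflection t)
    (hlt : cs.length (x * t) < cs.length x) : SubProd cs ω (x * t) := by
  obtain ⟨l, hl, rfl⟩ := hx
  obtain ⟨k, -, hk⟩ := exchange cs ht hlt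
  exact ⟨l.eraseIdx k, (List.eraseIdx_sublist l k).trans hl, hk.symm⟩

theorem sub_concat {ω : List B} {i : B} {x : W} :
    SubProd cs (ω ++ [i]) x ↔ SubProd cs ω x ∨ SubProd cs ω (x * cs.simple i) := by
  constructor
  · rintro ⟨l, hl, rfl⟩
    obtain ⟨l₁, l₂, rfl, h₁, h₂⟩ := List.sublist_append_iff.1 hl
    rcases List.sublist_singleton.1 h₂ with rfl | rfl
    · exact Or.inl ⟨l₁, h₁, by simp⟩
    · exact Or.inr ⟨l₁, h₁, by simp [cs.wordProd_append]⟩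
  · rintro (⟨l, hl, rfl⟩ | ⟨l, hl, h⟩)
    · exact ⟨l, hl.trans (List.sublist_append_left _ _), rfl⟩
    · exact ⟨l ++ [i], hl.append_right _, by simp [cs.wordProd_append, h]⟩

theorem sub_of_descent {ω : List B} {i : B} {x : W} (hx : SubProd cs (ω ++ [i]) x)
    (hd : cs.length (x * cs.simple i) < cs.length x) : SubProd cs ω (x * cs.simple i) := by
  rcases (sub_concat cs).1 hx with h | h
  · exact h.mul_reflection cs (cs.isReflection_simple i) hd
  · exact h

theorem sub_of_not_descent {ω : List B} {i : B} {x : W} (hx : SubProd cs (ω ++ [i]) x)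
    (hd : ¬ cs.length (x * cs.simple i) < cs.length x) : SubProd cs ω x := by
  rcases (sub_concat cs).1 hx with h | h
  · exact h
  · have := h.mul_reflection cs (cs.isReflection_simple i) (by
      have := cs.length_mul_simple_ne x i
      rw [cs.simple_mul_simple_cancel_right]
      omega)
    rwa [cs.simple_mul_simple_cancel_right] at this

/-! ### Chains of reflections and independence of the reduced word -/

/-- One descending step `v ↦ v t` along a reflection `t`. -/
def Step (v u : W) : Prop :=
  ∃ t, cs.IsReflection t ∧ cs.length (v * t) < cs.length v ∧ u = v * t

/-- `Chain cs v u`: `u` is reached from `v` by descending steps. -/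
def Chain : W → W → Prop := Relation.ReflTransGen (Step cs)

theorem Chain.sub {ω : List B} {v u : W} (h : Chain cs v u) (hv : SubProd cs ω v) : SubProd cs ω u := by
  induction h with
  | refl => exact hv
  | tail _ hs ih =>
    obtain ⟨t, ht, hlt, rfl⟩ := hs
    exact ih.mul_reflection cs ht hlt

theorem step_mul_simple {v u : W} (h : Step cs v u) (i : B) :
    Chain cs v (u * cs.simple i) ∨ Chain cs (v * cs.simple i) (u * cs.simple i) := by
  obtain ⟨t, ht, hlt, rfl⟩ := h
  have ht' : cs.IsReflection (cs.simple i * t * cs.simple i) := by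
    simpa using ht.conj (cs.simple i)
  have he : v * cs.simple i * (cs.simple i * t * cs.simple i) = v * t * cs.simple i := by
    simp [← mul_assoc]
  by_cases hc : cs.length (v * t * cs.simple i) < cs.length (v * cs.simple i)
  · exact Or.inr (.single ⟨_, ht', by rwa [he], he.symm⟩)
  -- Otherwise `s i` is a descent of `v` but not of `v t`, and exchange forces `t = s i`.
  have hne := ht'.length_mul_left_ne (v * cs.simple i)
  rw [he] at hne
  left
  have hv := cs.length_mul_simple v i
  have hvt := cs.length_mul_simple (v * t) i
  obtain ⟨α, hα, hαv⟩ := cs.exists_isReduced (v * cs.simple i)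
  have hw : cs.wordProd (α ++ [i]) = v := by
    rw [cs.wordProd_append, ← hαv]; simp
  have hlen : α.length + 1 = cs.length v := by
    rw [← hα.eq, ← hαv]; omega
  obtain ⟨k, hk, hke⟩ := exchange (ω := α ++ [i]) cs ht (by rwa [hw])
  rw [hw] at hke
  rcases Nat.lt_or_ge k α.length with hlt' | hge
  · exfalso
    rw [List.eraseIdx_append_of_lt_length hlt', cs.wordProd_append, cs.wordProd_singleton] at hke
    have h1 := cs.length_wordProd_le (α.eraseIdx k)
    rw [List.length_eraseIdx_of_lt hlt'] at h1
    rw [hke, cs.simple_mul_simple_cancel_right] at hvt hc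
    omega
  · have hk' : k = α.length := by simp at hk; omega
    subst hk'
    have : (α ++ [i]).eraseIdx α.length = α := by
      rw [List.eraseIdx_append_of_length_le le_rfl]; simp
    rw [this, ← hαv] at hke
    rw [hke, cs.simple_mul_simple_cancel_right]
    exact .refl

/-- The lifting argument: right multiplication by `s i` is almost compatible with chains. -/
theorem chain_mul_simple {v u : W} (h : Chain cs v u) (i : B) :
    Chain cs v (u * cs.simple i) ∨ Chain cs (v * cs.simple i) (u * cs.simple i) := by
  induction h with
  | refl => exact Or.inr .refl
  | tail hvu hs ih =>
    rcases step_mul_simple cs hs i with h | h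
    · exact Or.inl (hvu.trans h)
    · exact ih.imp (fun h' => h'.trans h) (fun h' => h'.trans h)

theorem chain_of_sub {ω : List B} (hω : cs.IsReduced ω) {x : W} (hx : SubProd cs ω x) :
    Chain cs (cs.wordProd ω) x := by
  induction ω using List.reverseRecOn generalizing x with
  | nil =>
    obtain ⟨l, hl, rfl⟩ := hx
    rw [List.sublist_nil.1 hl]
    exact .refl
  | append_singleton α i ih =>
    have hα : cs.IsReduced α := by simpa using hω.take α.length
    have hp : cs.wordProd (α ++ [i]) = cs.wordProd α * cs.simple i := by
      simp [cs.wordProd_append]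
    have hdown : Chain cs (cs.wordProd (α ++ [i])) (cs.wordProd α) := by
      refine .single ⟨cs.simple i, cs.isReflection_simple i, ?_, ?_⟩
      · rw [hω.eq, hp, cs.simple_mul_simple_cancel_right, hα.eq]; simp
      · rw [hp, cs.simple_mul_simple_cancel_right]
    rcases (sub_concat cs).1 hx with h | h
    · exact hdown.trans (ih hα h)
    · have := chain_mul_simple cs (ih hα h) i
      rw [cs.simple_mul_simple_cancel_right] at this
      rcases this with h' | h'
      · exact hdown.trans h'
      · rwa [hp]

theorem sub_of_bruhatLE {w : List B} {x : W} (h : BruhatLE cs x (cs.wordProd w)) :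
    SubProd cs w x := by
  obtain ⟨ω, hω, he, l, hl, -, hlx⟩ := h
  have := chain_of_sub cs hω ⟨l, hl, hlx⟩
  rw [he] at this
  exact this.sub cs ⟨w, List.Sublist.refl w, rfl⟩

/-! ### Masks -/

theorem maskPrefix_succ (w : List B) (σ : Fin w.length → Bool) {j : ℕ} (hj : j < w.length) :
    maskPrefix cs w σ (j + 1) =
      maskPrefix cs w σ j * if σ ⟨j, hj⟩ then cs.simple w[j] else 1 := by
  simp [maskPrefix, hj]

theorem maskPrefix_congr (w : List B) {σ τ : Fin w.length → Bool} {j : ℕ}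
    (h : ∀ i : Fin w.length, i.1 < j → σ i = τ i) : maskPrefix cs w σ j = maskPrefix cs w τ j := by
  induction j with
  | zero => rfl
  | succ j ih =>
    rw [maskPrefix, maskPrefix, ih fun i hi => h i (by omega)]
    split_ifs with h1 h2 h3 h3 <;> first | rfl | (have := h ⟨j, h1⟩ (by simp); simp_all)

theorem exists_mask (w : List B) {j : ℕ} (hj : j ≤ w.length) {x : W} (hx : SubProd cs (w.take j) x) :
    ∃ σ : Fin w.length → Bool,
      (∀ i : Fin w.length, i.1 < j → ¬ IsDefect cs w σ i) ∧ maskPrefix cs w σ j = x := by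
  induction j generalizing x with
  | zero =>
    obtain ⟨l, hl, rfl⟩ := hx
    simp only [List.take_zero, List.sublist_nil] at hl
    subst hl
    exact ⟨fun _ => false, by simp, by simp [maskPrefix]⟩
  | succ j ih =>
    have hj' : j < w.length := hj
    rw [List.take_succ_eq_append_getElem hj'] at hx
    -- Extending a mask at position `j` by the entry `b`.
    have key : ∀ (b : Bool) (y : W), SubProd cs (w.take j) y →
        ¬ cs.length (y * cs.simple w[j]) < cs.length y →
        x = y * (if b then cs.simple w[j] else 1) →
        ∃ σ : Fin w.length → Bool, (∀ i : Fin w.length, i.1 < j + 1 → ¬ IsDefect cs w σ i) ∧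
          maskPrefix cs w σ (j + 1) = x := by
      intro b y hy hd hxy
      obtain ⟨σ, hσ, hσy⟩ := ih hj'.le hy
      have hagree : ∀ m ≤ j, maskPrefix cs w (Function.update σ ⟨j, hj'⟩ b) m =
          maskPrefix cs w σ m := by
        intro m hm
        refine maskPrefix_congr cs w fun i hi => Function.update_of_ne ?_ _ _
        intro h
        rw [h] at hi
        exact absurd hi (by simpa using hm)
      refine ⟨Function.update σ ⟨j, hj'⟩ b, fun i hi => ?_, ?_⟩
      · rw [IsDefect, hagree i (by omega)]
        rcases Nat.lt_succ_iff_lt_or_eq.1 hi with h | h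
        · exact hσ i h
        · obtain rfl : i = ⟨j, hj'⟩ := Fin.ext h
          simpa [hσy] using hd
      · rw [maskPrefix_succ cs w _ hj', hagree j le_rfl, hσy, hxy]
        simp
    by_cases hd : cs.length (x * cs.simple w[j]) < cs.length x
    · exact key true _ (sub_of_descent cs hx hd)
        (by rw [cs.simple_mul_simple_cancel_right]; omega) (by simp)
    · exact key false x (sub_of_not_descent cs hx hd) hd (by simp)

/-- A defect-free mask selects a reduced subword. -/
theorem exists_reduced_subword (w : List B) (σ : Fin w.length → Bool) {j : ℕ} (hj : j ≤ w.length)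
    (hσ : ∀ i : Fin w.length, i.1 < j → ¬ IsDefect cs w σ i) :
    ∃ l, List.Sublist l (w.take j) ∧ cs.IsReduced l ∧ cs.wordProd l = maskPrefix cs w σ j := by
  induction j with
  | zero => exact ⟨[], by simp, by simp [CoxeterSystem.IsReduced], by simp [maskPrefix]⟩
  | succ j ih =>
    have hj' : j < w.length := hj
    obtain ⟨l, hl, hr, hp⟩ := ih hj'.le fun i hi => hσ i (by omega)
    have hd := hσ ⟨j, hj'⟩ (by simp)
    rw [List.take_succ_eq_append_getElem hj', maskPrefix_succ cs w σ hj']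
    by_cases hb : σ ⟨j, hj'⟩
    · have hp' : cs.wordProd (l ++ [w[j]]) = maskPrefix cs w σ j * cs.simple w[j] := by
        simp [cs.wordProd_append, hp]
      refine ⟨l ++ [w[j]], hl.append_right _, ?_, by simp [hb, hp']⟩
      have h1 := cs.length_mul_simple (maskPrefix cs w σ j) w[j]
      have h2 := hr.eq
      simp only [IsDefect, List.get_eq_getElem] at hd
      rw [hp] at h2
      rw [CoxeterSystem.IsReduced, hp', List.length_append, List.length_singleton]
      omega
    · exact ⟨l, hl.trans (List.sublist_append_left _ _), hr, by simp [hb, hp]⟩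

theorem mask_unique (w : List B) {σ τ : Fin w.length → Bool} {j : ℕ} (hj : j ≤ w.length)
    (hσ : ∀ i : Fin w.length, i.1 < j → ¬ IsDefect cs w σ i)
    (hτ : ∀ i : Fin w.length, i.1 < j → ¬ IsDefect cs w τ i)
    (h : maskPrefix cs w σ j = maskPrefix cs w τ j) :
    ∀ i : Fin w.length, i.1 < j → σ i = τ i := by
  induction j with
  | zero => intro i hi; omega
  | succ j ih =>
    have hj' : j < w.length := hj
    -- The entry at `j` records whether the letter `w[j]` is a right descent of the product.
    have key : ∀ ρ : Fin w.length → Bool, ¬ IsDefect cs w ρ ⟨j, hj'⟩ →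
        (ρ ⟨j, hj'⟩ = true ↔ cs.length (maskPrefix cs w ρ (j + 1) * cs.simple w[j]) <
          cs.length (maskPrefix cs w ρ (j + 1))) := by
      intro ρ hρ
      have h1 := cs.length_mul_simple (maskPrefix cs w ρ j) w[j]
      simp only [IsDefect, List.get_eq_getElem] at hρ
      rw [maskPrefix_succ cs w ρ hj']
      by_cases hb : ρ ⟨j, hj'⟩
      · simp only [hb, if_true, cs.simple_mul_simple_cancel_right, true_iff]
        omega
      · simp [hb, not_lt.1 hρ]
    have hb : σ ⟨j, hj'⟩ = τ ⟨j, hj'⟩ := by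
      rw [Bool.eq_iff_iff, key σ (hσ _ (by simp)), key τ (hτ _ (by simp)), h]
    rw [maskPrefix_succ cs w σ hj', maskPrefix_succ cs w τ hj', hb] at h
    have := ih hj'.le (fun i hi => hσ i (by omega)) (fun i hi => hτ i (by omega))
      (mul_right_cancel h)
    intro i hi
    rcases Nat.lt_succ_iff_lt_or_eq.1 hi with h' | h'
    · exact this i h'
    · obtain rfl : i = ⟨j, hj'⟩ := Fin.ext h'
      exact hb

theorem exists_mask_of_bruhatLE {w : List B} {x : W} (h : BruhatLE cs x (cs.wordProd w)) :
    ∃ σ : Fin w.length → Bool, (∀ i, ¬ IsDefect cs w σ i) ∧ maskProd cs w σ = x := by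
  obtain ⟨σ, h₁, h₂⟩ := exists_mask cs w le_rfl (x := x) (by simpa using sub_of_bruhatLE cs h)
  exact ⟨σ, fun i => h₁ i i.2, h₂⟩

end ConstantMasks

/-- The elements encoded by defect-free (constant) masks on a reduced word `w` are exactly
the Bruhat interval `[1, wordProd w]`, and each such element has exactly one
defect-free mask. -/
theorem constant_masks_give_bruhat_interval {M : CoxeterMatrix B} (cs : CoxeterSystem M W)
    (w : List B) (hred : cs.IsReduced w) :
    ({x : W | ∃ σ : Fin w.length → Bool,
        (∀ i, ¬ IsDefect cs w σ i) ∧ maskProd cs w σ = x}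
      = {x : W | BruhatLE cs x (cs.wordProd w)}) ∧
    ∀ x : W, BruhatLE cs x (cs.wordProd w) →
      ∃! σ : Fin w.length → Bool, (∀ i, ¬ IsDefect cs w σ i) ∧ maskProd cs w σ = x := by
  refine ⟨?_, fun x hx => ?_⟩
  · ext x
    refine ⟨?_, ConstantMasks.exists_mask_of_bruhatLE cs⟩
    rintro ⟨σ, hσ, rfl⟩
    obtain ⟨l, hl, hr, hp⟩ :=
      ConstantMasks.exists_reduced_subword cs w σ le_rfl fun i _ => hσ i
    exact ⟨w, hred, rfl, l, by simpa using hl, hr, hp⟩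
  · obtain ⟨σ, hσ, hσx⟩ := ConstantMasks.exists_mask_of_bruhatLE cs hx
    refine ⟨σ, ⟨hσ, hσx⟩, fun τ hτ => ?_⟩
    funext i
    exact ConstantMasks.mask_unique cs w le_rfl (fun i _ => hτ.1 i) (fun i _ => hσ i)
      (hτ.2.trans hσx.symm) i i.2
end

section
/- Let 𝗐 = (s_{d_1},…,s_{d_ℓ}) be a reduced word for a permutation w ∈ S_n and let σ be any mask on 𝗐. Then for every j with 1 ≤ j ≤ ℓ: if lpred(j) is defined, then V_{lpred(j)}(σ) ⊆ V_j(σ), and otherwise E_{d_j−1} ⊆ V_j(σ); and if rpred(j) is defined, then V_j(σ) ⊆ V_{rpred(j)}(σ), and otherwise V_j(σ) ⊆ E_{d_j+1}. (That is, the tuple of coordinate subspaces (V_1(σ),…,V_ℓ(σ)) satisfies the incidence conditions defining the Bott–Samelson variety Z_𝗐.) -/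
/-!
The letter `s_d` changes the image of the initial segment `{1, …, t}` under a prefix product only
if `d = t` (1-based). Thus this image is constant along any stretch of the word that avoids the
letter `s_t` (`maskPerm_image_initial`). Applying this with `t = d_j - 1` and `t = d_j + 1` to the
stretch from the last preceding occurrence of `s_t` (or from the start of the word, where the prefix
product is the identity) up to and including position `j` identifies `V_{lpred(j)}`, `E_{d_j-1}`,
`V_{rpred(j)}`, `E_{d_j+1}` with spans of images of `{1, …, d_j ∓ 1}` under the same permutation
`𝗐^{σ[j]}` that defines `V_j`. The inclusions then hold because the initial segments are nested.
-/

noncomputable section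

/-- The adjacent transposition `s_i` of `Fin (n+1)` swapping `i` and `i+1`
(0-based; this is the paper's `s_{i+1}` in 1-based notation). -/
def adjTransposition {n : ℕ} (i : Fin n) : Equiv.Perm (Fin (n + 1)) :=
  Equiv.swap i.castSucc i.succ

/-- The product `𝗐^{σ[j]}` of the first `j` letters of the word `ds` selected by the mask `σ`. -/
def maskPerm {n ℓ : ℕ} (ds : Fin ℓ → Fin n) (σ : Fin ℓ → Bool) :
    ℕ → Equiv.Perm (Fin (n + 1))
  | 0 => 1
  | j + 1 =>
      maskPerm ds σ j *
        if h : j < ℓ then (if σ ⟨j, h⟩ then adjTransposition (ds ⟨j, h⟩) else 1) else 1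

/-- The standard basis vector `e_k` of `ℂ^(n+1)`. -/
def stdVec {n : ℕ} (k : Fin (n + 1)) : Fin (n + 1) → ℂ := Pi.single k 1

/-- The coordinate subspace of `ℂ^(n+1)` spanned by the standard basis vectors `e_k`, `k ∈ S`. -/
def coordSubspace {n : ℕ} (S : Set (Fin (n + 1))) : Submodule ℂ (Fin (n + 1) → ℂ) :=
  Submodule.span ℂ (stdVec '' S)

/-- The subspace `E_i = span(e_1, …, e_i)` (1-based), i.e. the span of the first `i`
standard basis vectors. -/
def Esub (n i : ℕ) : Submodule ℂ (Fin (n + 1) → ℂ) :=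
  coordSubspace {k : Fin (n + 1) | (k : ℕ) < i}

/-- The coordinate subspace `V_j(σ) = span(e_{𝗐^{σ[j]}(1)}, …, e_{𝗐^{σ[j]}(d_j)})`, where the
paper's `d_j` is `(ds j : ℕ) + 1` and the paper's (1-based) position `j` is our `(j : ℕ) + 1`. -/
def Vsub {n ℓ : ℕ} (ds : Fin ℓ → Fin n) (σ : Fin ℓ → Bool) (j : Fin ℓ) :
    Submodule ℂ (Fin (n + 1) → ℂ) :=
  coordSubspace ((maskPerm ds σ ((j : ℕ) + 1)) '' {k : Fin (n + 1) | (k : ℕ) ≤ (ds j : ℕ)})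

/-- `ds` is a reduced word for the permutation `w`: its product is `w` and no shorter word of
adjacent transpositions has product `w`. -/
def IsReducedWord {n ℓ : ℕ} (ds : Fin ℓ → Fin n) (w : Equiv.Perm (Fin (n + 1))) : Prop :=
  maskPerm ds (fun _ => true) ℓ = w ∧
    ∀ (ℓ' : ℕ) (ds' : Fin ℓ' → Fin n),
      maskPerm ds' (fun _ => true) ℓ' = w → ℓ ≤ ℓ'

/-- `k = lpred(j)`: the largest index `k < j` with `d_k = d_j - 1`. -/
def IsLpred {n ℓ : ℕ} (ds : Fin ℓ → Fin n) (j k : Fin ℓ) : Prop :=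
  k < j ∧ (ds k : ℕ) + 1 = (ds j : ℕ) ∧
    ∀ m : Fin ℓ, k < m → m < j → (ds m : ℕ) + 1 ≠ (ds j : ℕ)

/-- `k = rpred(j)`: the largest index `k < j` with `d_k = d_j + 1`. -/
def IsRpred {n ℓ : ℕ} (ds : Fin ℓ → Fin n) (j k : Fin ℓ) : Prop :=
  k < j ∧ (ds k : ℕ) = (ds j : ℕ) + 1 ∧
    ∀ m : Fin ℓ, k < m → m < j → (ds m : ℕ) ≠ (ds j : ℕ) + 1

/-- An adjacent transposition `s_d` stabilises every initial segment of size `t` other than the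
one that ends between the two swapped positions. -/
lemma adjTransposition_image_initial {n : ℕ} (d : Fin n) (t : ℕ) (h : (d : ℕ) + 1 ≠ t) :
    adjTransposition d '' {k : Fin (n + 1) | (k : ℕ) < t} = {k : Fin (n + 1) | (k : ℕ) < t} := by
  have key : ∀ k : Fin (n + 1), (k : ℕ) < t → ((adjTransposition d k : Fin (n + 1)) : ℕ) < t := by
    intro k hk
    unfold adjTransposition
    rw [Equiv.swap_apply_def]
    split_ifs with h1 h2
    · subst h1
      simp only [Fin.val_castSucc] at hk
      simp only [Fin.val_succ]
      omega
    · subst h2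
      simp only [Fin.val_succ] at hk
      simp only [Fin.val_castSucc]
      omega
    · exact hk
  ext x
  constructor
  · rintro ⟨k, hk, rfl⟩
    exact key k hk
  · intro hx
    exact ⟨adjTransposition d x, key x hx, by simp [adjTransposition]⟩

/-- If no letter in the positions `[a, b)` cuts the initial segment of size `t`, the masked prefixes
at `a` and `b` map this segment to the same set. -/
lemma maskPerm_image_initial {n ℓ : ℕ} (ds : Fin ℓ → Fin n) (σ : Fin ℓ → Bool) (t a b : ℕ)
    (hab : a ≤ b) (h : ∀ m : Fin ℓ, a ≤ (m : ℕ) → (m : ℕ) < b → (ds m : ℕ) + 1 ≠ t) :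
    maskPerm ds σ b '' {k : Fin (n + 1) | (k : ℕ) < t} =
      maskPerm ds σ a '' {k : Fin (n + 1) | (k : ℕ) < t} := by
  induction b, hab using Nat.le_induction with
  | base => rfl
  | succ b hab ih =>
    rw [← ih fun m h1 h2 => h m h1 (by omega), maskPerm, Equiv.Perm.coe_mul, Set.image_comp]
    congr 1
    split_ifs with hb hs
    · exact adjTransposition_image_initial _ _ (h ⟨b, hb⟩ hab (Nat.lt_succ_self b))
    · simp
    · simp

lemma coordSubspace_mono {n : ℕ} {S T : Set (Fin (n + 1))} (h : S ⊆ T) :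
    coordSubspace S ≤ coordSubspace T :=
  Submodule.span_mono (Set.image_mono h)

lemma Vsub_eq {n ℓ : ℕ} (ds : Fin ℓ → Fin n) (σ : Fin ℓ → Bool) (j : Fin ℓ) :
    Vsub ds σ j = coordSubspace
      (maskPerm ds σ ((j : ℕ) + 1) '' {k : Fin (n + 1) | (k : ℕ) < (ds j : ℕ) + 1}) := by
  simp only [Vsub, Nat.lt_succ_iff]

/-- The tuple of coordinate subspaces `(V_1(σ), …, V_ℓ(σ))` associated to any mask `σ` on a
reduced word satisfies the incidence conditions defining the Bott–Samelson variety. -/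
theorem mask_fixed_point_mem_bottSamelson {n ℓ : ℕ} (ds : Fin ℓ → Fin n)
    (w : Equiv.Perm (Fin (n + 1))) (hred : IsReducedWord ds w)
    (σ : Fin ℓ → Bool) (j : Fin ℓ) :
    ((∀ k, IsLpred ds j k → Vsub ds σ k ≤ Vsub ds σ j) ∧
      ((¬ ∃ k, k < j ∧ (ds k : ℕ) + 1 = (ds j : ℕ)) → Esub n (ds j : ℕ) ≤ Vsub ds σ j)) ∧
    ((∀ k, IsRpred ds j k → Vsub ds σ j ≤ Vsub ds σ k) ∧
      ((¬ ∃ k, k < j ∧ (ds k : ℕ) = (ds j : ℕ) + 1) →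
        Vsub ds σ j ≤ Esub n ((ds j : ℕ) + 2))) := by
  have image_zero : ∀ t, maskPerm ds σ 0 '' {k : Fin (n + 1) | (k : ℕ) < t} =
      {k : Fin (n + 1) | (k : ℕ) < t} := fun t => by simp [maskPerm]
  -- A letter strictly before `j` is handled by the predecessor condition, and the letter at `j`
  -- itself is `d_j`, which is neither `d_j - 1` nor `d_j + 1`.
  have last : ∀ m : Fin ℓ, (m : ℕ) < (j : ℕ) + 1 → m < j ∨ m = j := fun m hm => by
    rcases Nat.lt_succ_iff_lt_or_eq.mp hm with h | h
    · exact Or.inl h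
    · exact Or.inr (Fin.ext h)
  refine ⟨⟨?_, ?_⟩, ?_, ?_⟩
  · rintro k ⟨hkj, hk, hmax⟩
    rw [Vsub_eq, Vsub_eq, ← maskPerm_image_initial ds σ _ ((k : ℕ) + 1) ((j : ℕ) + 1)
      (Nat.succ_le_succ (le_of_lt hkj))]
    · refine coordSubspace_mono (Set.image_mono fun x (hx : (x : ℕ) < _) => ?_)
      change (x : ℕ) < _
      omega
    · intro m h1 h2
      rcases last m h2 with h | rfl
      · have := hmax m h1 h
        omega
      · omega
  · intro hno
    rw [Vsub_eq, Esub, ← image_zero, ← maskPerm_image_initial ds σ _ 0 ((j : ℕ) + 1)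
      (Nat.zero_le _)]
    · refine coordSubspace_mono (Set.image_mono fun x (hx : (x : ℕ) < _) => ?_)
      change (x : ℕ) < _
      omega
    · intro m _ h2 he
      rcases last m h2 with h | rfl
      · exact hno ⟨m, h, he⟩
      · omega
  · rintro k ⟨hkj, hk, hmax⟩
    rw [Vsub_eq, Vsub_eq, ← maskPerm_image_initial ds σ _ ((k : ℕ) + 1) ((j : ℕ) + 1)
      (Nat.succ_le_succ (le_of_lt hkj))]
    · refine coordSubspace_mono (Set.image_mono fun x (hx : (x : ℕ) < _) => ?_)
      change (x : ℕ) < _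
      omega
    · intro m h1 h2
      rcases last m h2 with h | rfl
      · have := hmax m h1 h
        omega
      · omega
  · intro hno
    rw [Vsub_eq, Esub, ← image_zero ((ds j : ℕ) + 2),
      ← maskPerm_image_initial ds σ _ 0 ((j : ℕ) + 1) (Nat.zero_le _)]
    · refine coordSubspace_mono (Set.image_mono fun x (hx : (x : ℕ) < _) => ?_)
      change (x : ℕ) < _
      omega
    · intro m _ h2 he
      rcases last m h2 with h | rfl
      · exact hno ⟨m, h, by omega⟩
      · omega
end
end

section
/- Let 𝗐 = (s_{d_1},…,s_{d_ℓ}) be a reduced word for a permutation w ∈ S_n. Suppose (V_1,…,V_ℓ) is a tuple of subspaces of ℂ^n such that each V_j is spanned by a set of d_j standard basis vectors and the incidence conditions hold: for all j, V_{lpred(j)} ⊆ V_j (or E_{d_j−1} ⊆ V_j when lpred(j) is undefined) and V_j ⊆ V_{rpred(j)} (or V_j ⊆ E_{d_j+1} when rpred(j) is undefined). Then there exists a mask σ on 𝗐 such that V_j = V_j(σ) for all j. (Every torus-fixed point of the Bott–Samelson variety Z_𝗐 is of the form p_σ for some mask σ.) -/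
/-!
A tuple of coordinate subspaces is a tuple of subsets `S j ⊆ Fin (n + 1)`, and the incidence
conditions become inclusions of subsets. Reading the word from left to right, one maintains a
flag of subsets `flagAt ds S m i` (`i = 0, 1, 2, …`): initially the standard flag `{0, …, i - 1}`,
and at step `j` its member of size `d_j` is replaced by `S j`. The incidence conditions say
exactly that `S j` lies between the neighbouring members of the current flag
(`flagAt_subset`, `subset_flagAt`).

If the current flag is the image of the standard flag under a permutation `π`, then only two
sets of size `d_j` fit between these neighbours: the images of `{0, …, d_j - 1}` under `π` and
under `π * s_{d_j}` (`eq_or_eq_swap_image`). Choosing the mask entry accordingly makes the new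
flag the image of the standard flag under the next prefix product (`flagStep`), and the theorem
follows by induction along the word.
-/


noncomputable section

theorem coordSubspace_le_iff {n : ℕ} {A B : Set (Fin (n + 1))} :
    coordSubspace A ≤ coordSubspace B ↔ A ⊆ B := by
  constructor
  · intro h x hx
    by_contra hxB
    -- The `x`-th coordinate vanishes on `coordSubspace B` but not at `e_x`.
    have hker : coordSubspace B ≤ LinearMap.ker (LinearMap.proj (R := ℂ) (φ := fun _ => ℂ) x) := by
      refine Submodule.span_le.2 ?_
      rintro _ ⟨y, hy, rfl⟩
      have hne : x ≠ y := fun e => hxB (e ▸ hy)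
      simp [stdVec, hne]
    have hmem : stdVec x ∈ coordSubspace A := Submodule.subset_span ⟨x, hx, rfl⟩
    have := hker (h hmem)
    simp [stdVec] at this
  · intro h
    exact Submodule.span_mono (Set.image_mono h)

/-- The flag of subsets of `Fin (n + 1)` after reading `m` letters: `flagAt ds S m i` is its member
of size `i`. It starts as the standard flag, and reading letter `m` replaces the member of size
`ds m + 1` by `S m`. -/
def flagAt {n ℓ : ℕ} (ds : Fin ℓ → Fin n) (S : Fin ℓ → Finset (Fin (n + 1))) :
    ℕ → ℕ → Set (Fin (n + 1))
  | 0, i => {x : Fin (n + 1) | (x : ℕ) < i}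
  | m + 1, i =>
      if h : m < ℓ then (if (ds ⟨m, h⟩ : ℕ) + 1 = i then ↑(S ⟨m, h⟩) else flagAt ds S m i)
      else flagAt ds S m i

/-- A member of the current flag is either still standard or was set by the last letter
affecting it. -/
theorem flagAt_cases {n ℓ : ℕ} (ds : Fin ℓ → Fin n) (S : Fin ℓ → Finset (Fin (n + 1)))
    (m i : ℕ) :
    ((¬ ∃ k : Fin ℓ, (k : ℕ) < m ∧ (ds k : ℕ) + 1 = i) ∧
        flagAt ds S m i = {x : Fin (n + 1) | (x : ℕ) < i}) ∨
      ∃ k : Fin ℓ, (k : ℕ) < m ∧ (ds k : ℕ) + 1 = i ∧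
        (∀ k' : Fin ℓ, k < k' → (k' : ℕ) < m → (ds k' : ℕ) + 1 ≠ i) ∧
        flagAt ds S m i = ↑(S k) := by
  induction m with
  | zero => left; simp [flagAt]
  | succ m ih =>
    by_cases hm : m < ℓ ∧ ∃ h : m < ℓ, (ds ⟨m, h⟩ : ℕ) + 1 = i
    · obtain ⟨hm, _, hi⟩ := hm
      right
      refine ⟨⟨m, hm⟩, by simp, hi, ?_, by simp [flagAt, hm, hi]⟩
      intro k' h1 h2
      have : m < (k' : ℕ) := h1
      omega
    · have hnew : ∀ k : Fin ℓ, (k : ℕ) < m + 1 → (ds k : ℕ) + 1 = i → (k : ℕ) < m := by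
        intro k hk hi
        by_contra hlt
        have hkm : (k : ℕ) = m := by omega
        subst hkm
        exact hm ⟨k.2, k.2, hi⟩
      have hF : flagAt ds S (m + 1) i = flagAt ds S m i := by
        by_cases h : m < ℓ
        · have : ¬ (ds ⟨m, h⟩ : ℕ) + 1 = i := fun hi => hm ⟨h, h, hi⟩
          simp [flagAt, h, this]
        · simp [flagAt, h]
      rw [hF]
      rcases ih with ⟨h1, h2⟩ | ⟨k, h1, h2, h3, h4⟩
      · exact Or.inl ⟨fun ⟨k, hk, hi⟩ => h1 ⟨k, hnew k hk hi, hi⟩, h2⟩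
      · exact Or.inr ⟨k, by omega, h2, fun k' hk hk' hi => h3 k' hk (hnew k' hk' hi) hi, h4⟩

theorem flagAt_subset {n ℓ : ℕ} (ds : Fin ℓ → Fin n) (S : Fin ℓ → Finset (Fin (n + 1)))
    (j : Fin ℓ) (h1 : ∀ k, IsLpred ds j k → S k ⊆ S j)
    (h2 : (¬ ∃ k, k < j ∧ (ds k : ℕ) + 1 = (ds j : ℕ)) →
      {x : Fin (n + 1) | (x : ℕ) < (ds j : ℕ)} ⊆ ↑(S j)) :
    flagAt ds S j (ds j) ⊆ ↑(S j) := by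
  rcases flagAt_cases ds S j (ds j) with ⟨h, hF⟩ | ⟨k, hk, hd, hlast, hF⟩
  · rw [hF]; exact h2 h
  · rw [hF]; exact Finset.coe_subset.2 (h1 k ⟨hk, hd, fun m hm hm' => hlast m hm hm'⟩)

theorem subset_flagAt {n ℓ : ℕ} (ds : Fin ℓ → Fin n) (S : Fin ℓ → Finset (Fin (n + 1)))
    (j : Fin ℓ) (h1 : ∀ k, IsRpred ds j k → S j ⊆ S k)
    (h2 : (¬ ∃ k, k < j ∧ (ds k : ℕ) = (ds j : ℕ) + 1) →
      (↑(S j) : Set (Fin (n + 1))) ⊆ {x : Fin (n + 1) | (x : ℕ) < (ds j : ℕ) + 2}) :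
    ↑(S j) ⊆ flagAt ds S j ((ds j : ℕ) + 2) := by
  rcases flagAt_cases ds S j ((ds j : ℕ) + 2) with ⟨h, hF⟩ | ⟨k, hk, hd, hlast, hF⟩
  · rw [hF]
    exact h2 fun ⟨k, hk, hd⟩ => h ⟨k, hk, by omega⟩
  · rw [hF]
    refine Finset.coe_subset.2 (h1 k ⟨hk, by omega, fun m hm hm' hd' => hlast m hm hm' ?_⟩)
    omega

theorem adjTransposition_image {n : ℕ} (d : Fin n) {i : ℕ} (hi : i ≠ (d : ℕ) + 1) :
    adjTransposition d '' {x : Fin (n + 1) | (x : ℕ) < i} = {x : Fin (n + 1) | (x : ℕ) < i} := by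
  ext x
  rw [Equiv.image_eq_preimage_symm]
  simp only [adjTransposition, Equiv.symm_swap, Set.mem_preimage, Set.mem_ofPred_eq,
    Equiv.swap_apply_def]
  split_ifs with h1 h2
  · subst h1; simp; omega
  · subst h2; simp; omega
  · rfl

/-- A set of size `d + 1` between `{x < d}` and `{x < d + 2}` contains exactly one of `d` and
`d + 1`. -/
theorem eq_or_eq_swap_image {n : ℕ} (d : Fin n) (T : Finset (Fin (n + 1)))
    (hcard : T.card = (d : ℕ) + 1)
    (hlo : {x : Fin (n + 1) | (x : ℕ) < (d : ℕ)} ⊆ ↑T)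
    (hhi : (↑T : Set (Fin (n + 1))) ⊆ {x : Fin (n + 1) | (x : ℕ) < (d : ℕ) + 2}) :
    (↑T : Set (Fin (n + 1))) = {x : Fin (n + 1) | (x : ℕ) < (d : ℕ) + 1} ∨
      (↑T : Set (Fin (n + 1))) =
        adjTransposition d '' {x : Fin (n + 1) | (x : ℕ) < (d : ℕ) + 1} := by
  have hcardI : (Finset.Iic d.castSucc).card = (d : ℕ) + 1 := by simp
  have hI : (↑(Finset.Iic d.castSucc) : Set (Fin (n + 1))) =
      {x : Fin (n + 1) | (x : ℕ) < (d : ℕ) + 1} := by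
    ext x; simp [Fin.le_def]
  by_cases hd : d.castSucc ∈ T
  · left
    rw [← hI, Finset.coe_inj]
    refine (Finset.eq_of_subset_of_card_le ?_ (by omega)).symm
    intro x hx
    rw [Finset.mem_Iic, Fin.le_def, Fin.val_castSucc] at hx
    rcases hx.lt_or_eq with h | h
    · exact hlo h
    · rwa [show x = d.castSucc from Fin.ext h]
  · right
    rw [← hI]
    have himg : (↑((Finset.Iic d.castSucc).map (adjTransposition d).toEmbedding) :
        Set (Fin (n + 1))) = adjTransposition d '' ↑(Finset.Iic d.castSucc) := by simp
    rw [← himg, Finset.coe_inj]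
    refine Finset.eq_of_subset_of_card_le ?_ (by rw [Finset.card_map]; omega)
    intro x hx
    have hx2 : (x : ℕ) < (d : ℕ) + 2 := hhi hx
    have hxd : x ≠ d.castSucc := fun e => hd (e ▸ hx)
    rw [Finset.mem_map_equiv]
    simp only [adjTransposition, Equiv.symm_swap, Equiv.swap_apply_def, Finset.mem_Iic, if_neg hxd]
    split_ifs with h2
    · exact le_rfl
    · have h3 : (x : ℕ) ≠ (d : ℕ) + 1 := fun e => h2 (Fin.ext (by simpa using e))
      rw [Fin.le_def, Fin.val_castSucc]
      omega

/-- If the current flag is `π` applied to the standard flag, then reading one more letter `s`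
yields `π` or `π * s` applied to the standard flag. -/
theorem flagStep {n ℓ : ℕ} (ds : Fin ℓ → Fin n) (S : Fin ℓ → Finset (Fin (n + 1)))
    (j : Fin ℓ) (hcard : (S j).card = (ds j : ℕ) + 1)
    (hlo : flagAt ds S j (ds j) ⊆ ↑(S j))
    (hhi : ↑(S j) ⊆ flagAt ds S j ((ds j : ℕ) + 2))
    (π : Equiv.Perm (Fin (n + 1)))
    (hπ : ∀ i, flagAt ds S j i = π '' {x : Fin (n + 1) | (x : ℕ) < i}) :
    ∃ b : Bool, ∀ i, flagAt ds S ((j : ℕ) + 1) i =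
      (π * if b then adjTransposition (ds j) else 1) '' {x : Fin (n + 1) | (x : ℕ) < i} := by
  have hcoe : (↑((S j).map π.symm.toEmbedding) : Set (Fin (n + 1))) = π ⁻¹' ↑(S j) := by
    rw [Finset.coe_map]; exact Equiv.image_eq_preimage_symm π.symm _
  have hS : (↑(S j) : Set (Fin (n + 1))) = π '' (π ⁻¹' ↑(S j)) :=
    (Set.image_preimage_eq _ π.surjective).symm
  have key := eq_or_eq_swap_image (ds j) ((S j).map π.symm.toEmbedding)
    (by rw [Finset.card_map, hcard])
    (by rw [hcoe, ← Set.image_subset_iff, ← hπ]; exact hlo)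
    (by
      rw [hcoe, ← Set.image_subset_image_iff π.injective, ← hS, ← hπ]; exact hhi)
  rw [hcoe] at key
  have hF : ∀ i, flagAt ds S ((j : ℕ) + 1) i =
      if (ds j : ℕ) + 1 = i then ↑(S j) else flagAt ds S j i := by
    intro i; simp [flagAt]
  rcases key with h | h
  · refine ⟨false, fun i => ?_⟩
    rw [hF, if_neg Bool.false_ne_true, mul_one]
    split_ifs with hi
    · subst hi; rw [hS, h]
    · rw [hπ]
  · refine ⟨true, fun i => ?_⟩
    rw [hF, if_pos rfl, Equiv.Perm.coe_mul, Set.image_comp]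
    split_ifs with hi
    · subst hi; rw [hS, h]
    · rw [hπ, adjTransposition_image _ (Ne.symm hi)]

theorem maskPerm_congr {n ℓ : ℕ} (ds : Fin ℓ → Fin n) {σ τ : Fin ℓ → Bool} {m : ℕ}
    (h : ∀ k : Fin ℓ, (k : ℕ) < m → σ k = τ k) : maskPerm ds σ m = maskPerm ds τ m := by
  induction m with
  | zero => rfl
  | succ m ih =>
    rw [maskPerm, maskPerm, ih fun k hk => h k (by omega)]
    by_cases hm : m < ℓ
    · simp only [hm, dif_pos, h ⟨m, hm⟩ (by simp)]
    · simp only [hm, dif_neg, not_false_eq_true]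

theorem exists_mask {n ℓ : ℕ} (ds : Fin ℓ → Fin n) (S : Fin ℓ → Finset (Fin (n + 1)))
    (hcard : ∀ j, (S j).card = (ds j : ℕ) + 1)
    (hlo : ∀ j : Fin ℓ, flagAt ds S j (ds j) ⊆ ↑(S j))
    (hhi : ∀ j : Fin ℓ, ↑(S j) ⊆ flagAt ds S j ((ds j : ℕ) + 2)) (m : ℕ) (hm : m ≤ ℓ) :
    ∃ σ : Fin ℓ → Bool, ∀ m' ≤ m, ∀ i,
      flagAt ds S m' i = maskPerm ds σ m' '' {x : Fin (n + 1) | (x : ℕ) < i} := by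
  induction m with
  | zero =>
    refine ⟨fun _ => false, fun m' hm' i => ?_⟩
    obtain rfl : m' = 0 := by omega
    simp [flagAt, maskPerm]
  | succ m ih =>
    obtain ⟨σ, hσ⟩ := ih (by omega)
    have hmℓ : m < ℓ := hm
    obtain ⟨b, hb⟩ := flagStep ds S ⟨m, hmℓ⟩ (hcard _) (hlo _) (hhi _) _ (hσ m le_rfl)
    have hagree : ∀ m' ≤ m, maskPerm ds (Function.update σ ⟨m, hmℓ⟩ b) m' = maskPerm ds σ m' := by
      intro m' hm'
      refine maskPerm_congr ds fun k hk => Function.update_of_ne ?_ _ _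
      intro e
      have : (k : ℕ) = m := by rw [e]
      omega
    refine ⟨Function.update σ ⟨m, hmℓ⟩ b, fun m' hm' i => ?_⟩
    rcases Nat.lt_or_eq_of_le hm' with h | rfl
    · rw [hagree m' (by omega)]
      exact hσ m' (by omega) i
    · rw [maskPerm, hagree m le_rfl, dif_pos hmℓ, Function.update_self]
      exact hb i

/-- Every torus-fixed point of the Bott–Samelson variety — i.e. every tuple of coordinate
subspaces of the right dimensions satisfying the incidence conditions — arises from a mask. -/
theorem fixed_point_of_bottSamelson_is_mask {n ℓ : ℕ} (ds : Fin ℓ → Fin n)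
    (w : Equiv.Perm (Fin (n + 1))) (hred : IsReducedWord ds w)
    (V : Fin ℓ → Submodule ℂ (Fin (n + 1) → ℂ))
    (hcoord : ∀ j : Fin ℓ, ∃ S : Finset (Fin (n + 1)),
      S.card = (ds j : ℕ) + 1 ∧ V j = coordSubspace ↑S)
    (hincl : ∀ j : Fin ℓ,
      ((∀ k, IsLpred ds j k → V k ≤ V j) ∧
        ((¬ ∃ k, k < j ∧ (ds k : ℕ) + 1 = (ds j : ℕ)) → Esub n (ds j : ℕ) ≤ V j)) ∧
      ((∀ k, IsRpred ds j k → V j ≤ V k) ∧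
        ((¬ ∃ k, k < j ∧ (ds k : ℕ) = (ds j : ℕ) + 1) → V j ≤ Esub n ((ds j : ℕ) + 2)))) :
    ∃ σ : Fin ℓ → Bool, ∀ j : Fin ℓ, V j = Vsub ds σ j := by
  choose S hcard hV using hcoord
  have hle : ∀ j k, V j ≤ V k ↔ S j ⊆ S k := fun j k => by
    rw [hV, hV, coordSubspace_le_iff, Finset.coe_subset]
  have hlo : ∀ j : Fin ℓ, flagAt ds S j (ds j) ⊆ ↑(S j) := fun j =>
    flagAt_subset ds S j (fun k hk => (hle k j).1 ((hincl j).1.1 k hk)) fun h => by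
      have := (hincl j).1.2 h
      rwa [hV, Esub, coordSubspace_le_iff] at this
  have hhi : ∀ j : Fin ℓ, ↑(S j) ⊆ flagAt ds S j ((ds j : ℕ) + 2) := fun j =>
    subset_flagAt ds S j (fun k hk => (hle j k).1 ((hincl j).2.1 k hk)) fun h => by
      have := (hincl j).2.2 h
      rwa [hV, Esub, coordSubspace_le_iff] at this
  obtain ⟨σ, hσ⟩ := exists_mask ds S hcard hlo hhi ℓ le_rfl
  refine ⟨σ, fun j => ?_⟩
  have h := hσ ((j : ℕ) + 1) j.2 ((ds j : ℕ) + 1)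
  -- Immediately after reading letter `j`, the flag member of size `ds j + 1` is `S j`.
  have hF : flagAt ds S ((j : ℕ) + 1) ((ds j : ℕ) + 1) = ↑(S j) := by simp [flagAt]
  rw [hF] at h
  rw [hV, h, Vsub]
  simp only [Nat.lt_succ_iff]
end
end

section
/- Let C and D be finite sets of integers with |C| = |D| + 1. Then there exists k ∈ C \ D such that #{m ∈ C : m < k} = #{m ∈ D : m < k}. -/
/-!
Let `k` be the least element of `C` such that more elements of `C` than of `D` are `≤ k`; the
maximum of `C` shows that such elements exist. The predecessor of `k` in `C`, if any, fails this
condition, so at most as many elements of `C` as of `D` are `< k`. Passing from `< k` to `≤ k`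
adds exactly one element of `C`, so the excess at `k` forces equality below `k` and `k ∉ D`.
-/

/-- Counting up to and including `k` adds at most the element `k` to the count below `k`. -/
lemma card_filter_le_eq (S : Finset ℤ) (k : ℤ) :
    (S.filter (fun m => m ≤ k)).card =
      (S.filter (fun m => m < k)).card + if k ∈ S then 1 else 0 := by
  split_ifs with hk
  · have hins : S.filter (fun m => m ≤ k) = insert k (S.filter (fun m => m < k)) := by
      ext m
      simp only [Finset.mem_filter, Finset.mem_insert]
      grind
    rw [hins, Finset.card_insert_of_notMem (by simp)]
  · rw [add_zero]
    congr 1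
    ext m
    simp only [Finset.mem_filter]
    grind

/-- If `C` and `D` are finite sets of integers with `|C| = |D| + 1`, then there is some
`k ∈ C \ D` having as many elements of `C` below it as elements of `D` below it. -/
theorem exists_balanced_element (C D : Finset ℤ) (h : C.card = D.card + 1) :
    ∃ k ∈ C, k ∉ D ∧
      (C.filter (fun m => m < k)).card = (D.filter (fun m => m < k)).card := by
  set S := C.filter (fun k =>
    (D.filter (fun m => m ≤ k)).card < (C.filter (fun m => m ≤ k)).card) with hS
  have hC : C.Nonempty := Finset.card_pos.mp (by omega)
  have hSne : S.Nonempty := by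
    refine ⟨C.max' hC, Finset.mem_filter.mpr ⟨C.max'_mem hC, ?_⟩⟩
    rw [Finset.filter_true_of_mem (s := C) (fun m hm => C.le_max' m hm)]
    have := Finset.card_filter_le D (fun m => m ≤ C.max' hC)
    omega
  obtain ⟨hkC, hk⟩ := Finset.mem_filter.mp (S.min'_mem hSne)
  have hmin : ∀ j ∈ S, S.min' hSne ≤ j := fun j hj => S.min'_le j hj
  generalize S.min' hSne = k at hkC hk hmin
  have hlt : (C.filter (fun m => m < k)).card ≤ (D.filter (fun m => m < k)).card := by
    rcases (C.filter (fun m => m < k)).eq_empty_or_nonempty with he | hne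
    · simp [he]
    · -- `j` is the predecessor of `k` in `C`; it is not in `S` by minimality of `k`.
      obtain ⟨j, hj, hjmax⟩ := Finset.exists_max_image _ id hne
      obtain ⟨hjC, hjk⟩ := Finset.mem_filter.mp hj
      have hjS : (C.filter (fun m => m ≤ j)).card ≤ (D.filter (fun m => m ≤ j)).card := by
        by_contra hcon
        exact absurd (hmin j (Finset.mem_filter.mpr ⟨hjC, not_le.mp hcon⟩)) (not_le.mpr hjk)
      have h1 : (C.filter (fun m => m < k)).card ≤ (C.filter (fun m => m ≤ j)).card :=
        Finset.card_le_card fun m hm =>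
          Finset.mem_filter.mpr ⟨(Finset.mem_filter.mp hm).1, hjmax m hm⟩
      have h2 : (D.filter (fun m => m ≤ j)).card ≤ (D.filter (fun m => m < k)).card :=
        Finset.card_le_card fun m hm =>
          Finset.mem_filter.mpr
            ⟨(Finset.mem_filter.mp hm).1, (Finset.mem_filter.mp hm).2.trans_lt hjk⟩
      omega
  rw [card_filter_le_eq C, card_filter_le_eq D, if_pos hkC] at hk
  by_cases hkD : k ∈ D
  · rw [if_pos hkD] at hk
    omega
  · rw [if_neg hkD] at hk
    exact ⟨k, hkC, hkD, by omega⟩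
end
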